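/- Fix an integer n ≥ 1. Then lim_{H→0⁺} f(H,n) = (1/√2)·E[(max_{1≤i≤n} ξ_i − ξ_0)⁺], where ξ_0, ξ_1, …, ξ_n are i.i.d. standard normal random variables and x⁺ := max{0, x}. (Equivalently, the limit equals E[max_{0≤i≤n} Z_{i/n}] for Z_t = (ξ_t − ξ_0)/√2 with i.i.d. standard normal (ξ_t).) -/

import Mathlib

open MeasureTheory ProbabilityTheory Real Set Filter Topology

noncomputable section

/-- `X` is a centered Gaussian process on the time set `S`: every finite linear
combination `∑ i, c i * X (ts i)` of its values at times in `S` is a centered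
Gaussian random variable. -/
def IsCenteredGaussianOn {Ω : Type} [MeasurableSpace Ω] (μ : Measure Ω)
    (X : ℝ → Ω → ℝ) (S : Set ℝ) : Prop :=
  (∀ t ∈ S, Measurable (X t)) ∧
  ∀ (k : ℕ) (c : Fin k → ℝ) (ts : Fin k → ℝ), (∀ i, ts i ∈ S) →
    ∃ v : NNReal, μ.map (fun ω => ∑ i, c i * X (ts i) ω) = gaussianReal 0 v

/-- The `L²`-norm `‖Y‖₂ = (E Y²)^{1/2}` of a real random variable. -/
def l2norm {Ω : Type} [MeasurableSpace Ω] (μ : Measure Ω) (Y : Ω → ℝ) : ℝ :=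
  Real.sqrt (∫ ω, (Y ω) ^ 2 ∂μ)

/-- The expected supremum `E [sup_{0 ≤ t ≤ 1} X_t]`. -/
def expMax {Ω : Type} [MeasurableSpace Ω] (μ : Measure Ω) (X : ℝ → Ω → ℝ) : ℝ :=
  ∫ ω, (⨆ t : Icc (0:ℝ) 1, X t.1 ω) ∂μ

/-- The expected maximum over the grid: `E [max_{0 ≤ i ≤ n} X_{i/n}]`. -/
def expMaxGrid {Ω : Type} [MeasurableSpace Ω] (μ : Measure Ω) (X : ℝ → Ω → ℝ) (n : ℕ) : ℝ :=
  ∫ ω, (⨆ i : Fin (n + 1), X (((i : ℕ) : ℝ) / (n : ℝ)) ω) ∂μ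

/-- `B` is a fractional Brownian motion with Hurst parameter `H`: a centered Gaussian
process on `[0,∞)` with a.s. continuous sample paths, `B 0 = 0`, and covariance
`E[B_s B_t] = (s^{2H} + t^{2H} - |t-s|^{2H}) / 2`. -/
def IsFBM {Ω : Type} [MeasurableSpace Ω] (μ : Measure Ω) (H : ℝ) (B : ℝ → Ω → ℝ) : Prop :=
  IsCenteredGaussianOn μ B (Ici 0) ∧
  (∀ᵐ ω ∂μ, ContinuousOn (fun t => B t ω) (Ici 0)) ∧
  (∀ᵐ ω ∂μ, B 0 ω = 0) ∧
  ∀ s t : ℝ, 0 ≤ s → 0 ≤ t →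
    ∫ ω, B s ω * B t ω ∂μ = (s ^ (2 * H) + t ^ (2 * H) - |t - s| ^ (2 * H)) / 2

/-- Weak convergence together with a uniform second moment bound implies convergence of the
integrals of an unbounded continuous function. -/
theorem tendsto_integral_of_sq_integral_le {E : Type*} [TopologicalSpace E] [MeasurableSpace E]
    [OpensMeasurableSpace E] {μ : ℕ → ProbabilityMeasure E} {ν : ProbabilityMeasure E}
    (h : Tendsto μ atTop (𝓝 ν)) {f : E → ℝ} (hf : Continuous f)
    (hμ : ∀ k, MemLp f 2 (μ k : Measure E)) (hν : MemLp f 2 (ν : Measure E)) {C : ℝ}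
    (hC : ∀ k, ∫ x, f x ^ 2 ∂(μ k : Measure E) ≤ C) :
    Tendsto (fun k => ∫ x, f x ∂(μ k : Measure E)) atTop (𝓝 (∫ x, f x ∂(ν : Measure E))) := by
  set D : ℝ := max (max C (∫ x, f x ^ 2 ∂(ν : Measure E))) 0 with hD
  have hD0 : 0 ≤ D := le_max_right _ _
  have hclamp : ∀ M : ℝ, 0 < M → ∀ y : ℝ, |y - max (-M) (min y M)| ≤ y ^ 2 / M := by
    intro M hM y
    rw [le_div_iff₀ hM]
    rcases le_total y M with h1 | h1
    · rw [min_eq_left h1]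
      rcases le_total (-M) y with h2 | h2
      · rw [max_eq_right h2]; simp; positivity
      · rw [max_eq_left h2, abs_of_nonpos (by linarith)]; nlinarith
    · rw [min_eq_right h1, max_eq_right (by linarith), abs_of_nonneg (by linarith)]; nlinarith
  have key : ∀ M : ℝ, 0 < M → ∀ ρ : ProbabilityMeasure E, MemLp f 2 (ρ : Measure E) →
      ∫ x, f x ^ 2 ∂(ρ : Measure E) ≤ D →
      |∫ x, f x ∂(ρ : Measure E) - ∫ x, max (-M) (min (f x) M) ∂(ρ : Measure E)| ≤ D / M := by
    intro M hM ρ hρ hρD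
    have hi : Integrable f (ρ : Measure E) := hρ.integrable (by norm_num)
    have hi2 : Integrable (fun x => max (-M) (min (f x) M)) (ρ : Measure E) :=
      (integrable_const _).sup (hi.inf (integrable_const _))
    rw [← integral_sub hi hi2]
    refine abs_integral_le_integral_abs.trans ?_
    refine (integral_mono (hi.sub hi2).abs (hρ.integrable_sq.div_const M)
      fun x => hclamp M hM (f x)).trans ?_
    rw [integral_div]
    gcongr
  rw [Metric.tendsto_atTop]
  intro ε hε
  obtain ⟨M, hM, hMε⟩ : ∃ M : ℝ, 0 < M ∧ D / M < ε / 3 := by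
    refine ⟨3 * (D + 1) / ε, by positivity, ?_⟩
    rw [div_lt_iff₀ (by positivity)]
    field_simp
    linarith
  let g : BoundedContinuousFunction E ℝ := BoundedContinuousFunction.ofNormedAddCommGroup
    (fun x => max (-M) (min (f x) M)) (by fun_prop) M (fun x => by
      rw [Real.norm_eq_abs, abs_le]
      exact ⟨le_max_left _ _, max_le (by linarith) (min_le_right _ _)⟩)
  have hg := (ProbabilityMeasure.tendsto_iff_forall_integral_tendsto.1 h) g
  rw [Metric.tendsto_atTop] at hg
  obtain ⟨N, hN⟩ := hg (ε / 3) (by positivity)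
  refine ⟨N, fun k hk => ?_⟩
  have h1 := key M hM (μ k) (hμ k) ((hC k).trans ((le_max_left _ _).trans (le_max_left _ _)))
  have h2 := key M hM ν hν ((le_max_right _ _).trans (le_max_left _ _))
  have h3 : |∫ x, max (-M) (min (f x) M) ∂(μ k : Measure E)
      - ∫ x, max (-M) (min (f x) M) ∂(ν : Measure E)| < ε / 3 := hN k hk
  rw [Real.dist_eq, abs_lt]
  rw [abs_le] at h1 h2
  rw [abs_lt] at h3
  constructor <;> linarith

/-- The characteristic function of a random vector all of whose linear combinations are centered
Gaussian. -/
theorem charFun_map_of_linearComb_gaussian {Ω : Type*} [MeasurableSpace Ω] {μ : Measure Ω}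
    {ι : Type*} [Fintype ι] {X : ι → Ω → ℝ} (hX : ∀ i, Measurable (X i))
    (h2 : ∀ i, MemLp (X i) 2 μ)
    (hG : ∀ c : ι → ℝ, ∃ v : NNReal, μ.map (fun ω => ∑ i, c i * X i ω) = gaussianReal 0 v)
    (t : EuclideanSpace ℝ ι) :
    charFun (μ.map (fun ω => WithLp.toLp 2 (fun i => X i ω))) t =
      Complex.exp (-((∑ i, ∑ j, t i * t j * ∫ ω, X i ω * X j ω ∂μ : ℝ) : ℂ) / 2) := by
  obtain ⟨v, hv⟩ := hG t
  have hmeas : Measurable (fun ω => ∑ i, t i * X i ω) := by fun_prop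
  have hvar : (v : ℝ) = ∑ i, ∑ j, t i * t j * ∫ ω, X i ω * X j ω ∂μ := by
    have e1 : ∫ x, x ^ 2 ∂(gaussianReal 0 v) = v := by
      have := variance_fun_id_gaussianReal (μ := 0) (v := v)
      rw [variance_eq_integral (by fun_prop)] at this
      simpa using this
    rw [← e1, ← hv, integral_map hmeas.aemeasurable (by fun_prop)]
    have hint : ∀ i j, Integrable (fun ω => X i ω * X j ω) μ :=
      fun i j => (h2 i).integrable_mul (h2 j)
    have e2 : ∀ ω, (∑ i, t i * X i ω) ^ 2 = ∑ i, ∑ j, t i * t j * (X i ω * X j ω) := by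
      intro ω
      rw [sq, Finset.sum_mul_sum]
      exact Finset.sum_congr rfl fun i _ => Finset.sum_congr rfl fun j _ => by ring
    simp_rw [e2]
    rw [integral_finsetSum _ fun i _ => integrable_finsetSum _ fun j _ => (hint i j).const_mul _]
    refine Finset.sum_congr rfl fun i _ => ?_
    rw [integral_finsetSum _ fun j _ => (hint i j).const_mul _]
    exact Finset.sum_congr rfl fun j _ => integral_const_mul _ _
  rw [← hvar]
  have hc := charFun_gaussianReal (μ := 0) (v := v) 1
  rw [← hv, charFun_apply_real, integral_map hmeas.aemeasurable (by fun_prop)] at hc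
  rw [charFun_apply, integral_map (by fun_prop) (by fun_prop)]
  convert hc using 1
  · refine integral_congr_ae (.of_forall fun ω => ?_)
    simp [PiLp.inner_apply]
  · congr 1
    push_cast
    ring

theorem continuous_iSup_coord (m : ℕ) :
    Continuous (fun x : EuclideanSpace ℝ (Fin (m + 1)) => ⨆ i, x i) := by
  have : (fun x : EuclideanSpace ℝ (Fin (m + 1)) => ⨆ i, x i) =
      fun x => Finset.univ.sup' Finset.univ_nonempty (fun i => x i) := by
    ext x
    rw [Finset.sup'_univ_eq_ciSup]
  rw [this]
  exact Continuous.finset_sup'_apply _ fun i _ => by fun_prop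

theorem sq_iSup_le_sum_sq {m : ℕ} (x : Fin (m + 1) → ℝ) : (⨆ i, x i) ^ 2 ≤ ∑ i, x i ^ 2 := by
  obtain ⟨i, hi⟩ := exists_eq_ciSup_of_finite (f := x)
  rw [← hi]
  exact Finset.single_le_sum (f := fun i => x i ^ 2) (fun _ _ => sq_nonneg _) (Finset.mem_univ i)

theorem memLp_iSup_coord {Ω : Type*} [MeasurableSpace Ω] {μ : Measure Ω} {m : ℕ}
    {X : Fin (m + 1) → Ω → ℝ} (hX : ∀ i, Measurable (X i)) (h2 : ∀ i, MemLp (X i) 2 μ) :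
    MemLp (fun ω => ⨆ i, X i ω) 2 μ := by
  have hm : Measurable (fun ω => ⨆ i, X i ω) := Measurable.iSup hX
  rw [memLp_two_iff_integrable_sq hm.aestronglyMeasurable]
  refine Integrable.mono' (integrable_finsetSum Finset.univ fun i _ => (h2 i).integrable_sq)
    (hm.pow_const 2).aestronglyMeasurable (.of_forall fun ω => ?_)
  rw [Real.norm_of_nonneg (sq_nonneg _)]
  exact sq_iSup_le_sum_sq _

theorem memLp_two_of_linearComb_gaussian {Ω : Type*} [MeasurableSpace Ω] {μ : Measure Ω}
    {ι : Type*} [Fintype ι] {X : ι → Ω → ℝ} (hX : ∀ i, Measurable (X i))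
    (hG : ∀ c : ι → ℝ, ∃ v : NNReal, μ.map (fun ω => ∑ i, c i * X i ω) = gaussianReal 0 v)
    (i : ι) : MemLp (X i) 2 μ := by
  classical
  obtain ⟨v, hv⟩ := hG (Pi.single i 1)
  have : (fun ω => ∑ j, (Pi.single i 1 : ι → ℝ) j * X j ω) = X i := by
    ext ω; simp [Pi.single_apply]
  rw [this] at hv
  have hid : MemLp id 2 (μ.map (X i)) := hv ▸ IsGaussian.memLp_two_id
  exact hid.comp_of_map (hX i).aemeasurable

/-- Convergence of covariances implies convergence of the expected maximum of centered Gaussian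
vectors. -/
theorem tendsto_integral_iSup_of_tendsto_cov {Ω Ω' : Type*} [MeasurableSpace Ω]
    [MeasurableSpace Ω'] {μ : Measure Ω} [IsProbabilityMeasure μ] {ν : Measure Ω'}
    [IsProbabilityMeasure ν] {m : ℕ} {X : ℕ → Fin (m + 1) → Ω → ℝ} {Z : Fin (m + 1) → Ω' → ℝ}
    (hX : ∀ k i, Measurable (X k i)) (hZ : ∀ i, Measurable (Z i))
    (hGX : ∀ k, ∀ c : Fin (m + 1) → ℝ,
      ∃ v : NNReal, μ.map (fun ω => ∑ i, c i * X k i ω) = gaussianReal 0 v)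
    (hGZ : ∀ c : Fin (m + 1) → ℝ,
      ∃ v : NNReal, ν.map (fun ω => ∑ i, c i * Z i ω) = gaussianReal 0 v)
    (hcov : ∀ i j, Tendsto (fun k => ∫ ω, X k i ω * X k j ω ∂μ) atTop
      (𝓝 (∫ ω, Z i ω * Z j ω ∂ν))) :
    Tendsto (fun k => ∫ ω, (⨆ i, X k i ω) ∂μ) atTop (𝓝 (∫ ω, (⨆ i, Z i ω) ∂ν)) := by
  have hX2 : ∀ k i, MemLp (X k i) 2 μ := fun k => memLp_two_of_linearComb_gaussian (hX k) (hGX k)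
  have hZ2 : ∀ i, MemLp (Z i) 2 ν := memLp_two_of_linearComb_gaussian hZ hGZ
  have mX : ∀ k, Measurable fun ω => WithLp.toLp 2 (fun i => X k i ω) := fun k => by fun_prop
  have mZ : Measurable fun ω => WithLp.toLp 2 (fun i => Z i ω) := by fun_prop
  let f : EuclideanSpace ℝ (Fin (m + 1)) → ℝ := fun x => ⨆ i, x i
  have hf : Continuous f := continuous_iSup_coord m
  let P : ℕ → ProbabilityMeasure (EuclideanSpace ℝ (Fin (m + 1))) := fun k =>
    ⟨μ.map fun ω => WithLp.toLp 2 (fun i => X k i ω),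
      Measure.isProbabilityMeasure_map (mX k).aemeasurable⟩
  let Q : ProbabilityMeasure (EuclideanSpace ℝ (Fin (m + 1))) :=
    ⟨ν.map fun ω => WithLp.toLp 2 (fun i => Z i ω),
      Measure.isProbabilityMeasure_map mZ.aemeasurable⟩
  have hPQ : Tendsto P atTop (𝓝 Q) := by
    rw [ProbabilityMeasure.tendsto_iff_tendsto_charFun]
    intro t
    change Tendsto (fun k => charFun (μ.map fun ω => WithLp.toLp 2 (fun i => X k i ω)) t) atTop
      (𝓝 (charFun (ν.map fun ω => WithLp.toLp 2 (fun i => Z i ω)) t))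
    simp_rw [fun k => charFun_map_of_linearComb_gaussian (hX k) (hX2 k) (hGX k) t,
      charFun_map_of_linearComb_gaussian hZ hZ2 hGZ t]
    have hsum : Tendsto (fun k => ∑ i, ∑ j, t i * t j * ∫ ω, X k i ω * X k j ω ∂μ) atTop
        (𝓝 (∑ i, ∑ j, t i * t j * ∫ ω, Z i ω * Z j ω ∂ν)) :=
      tendsto_finsetSum _ fun i _ => tendsto_finsetSum _ fun j _ => (hcov i j).const_mul _
    exact (Complex.continuous_exp.tendsto _).comp
      (((Complex.continuous_ofReal.tendsto _).comp hsum).neg.div_const 2)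
  obtain ⟨C, hC⟩ := (tendsto_finsetSum Finset.univ fun i _ => hcov i i).bddAbove_range
  have := tendsto_integral_of_sq_integral_le hPQ hf (C := C) (fun k => ?_) ?_ fun k => ?_
  · have e1 : ∀ k, ∫ x, f x ∂(P k : Measure _) = ∫ ω, (⨆ i, X k i ω) ∂μ := fun k =>
      integral_map (mX k).aemeasurable hf.aestronglyMeasurable
    have e2 : ∫ x, f x ∂(Q : Measure _) = ∫ ω, (⨆ i, Z i ω) ∂ν :=
      integral_map mZ.aemeasurable hf.aestronglyMeasurable
    simpa only [e1, e2] using this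
  · exact (memLp_map_measure_iff hf.aestronglyMeasurable (mX k).aemeasurable).2
      (memLp_iSup_coord (hX k) (hX2 k))
  · exact (memLp_map_measure_iff hf.aestronglyMeasurable mZ.aemeasurable).2
      (memLp_iSup_coord hZ hZ2)
  · have e1 : ∫ x, f x ^ 2 ∂(P k : Measure _) = ∫ ω, (⨆ i, X k i ω) ^ 2 ∂μ :=
      integral_map (mX k).aemeasurable (hf.pow 2).aestronglyMeasurable
    rw [e1]
    refine (integral_mono (memLp_iSup_coord (hX k) (hX2 k)).integrable_sq
      (integrable_finsetSum _ fun i _ => (hX2 k i).integrable_sq)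
      fun ω => sq_iSup_le_sum_sq _).trans ?_
    rw [integral_finsetSum _ fun i _ => (hX2 k i).integrable_sq]
    refine le_trans (le_of_eq ?_) (hC ⟨k, rfl⟩)
    simp only [sq]

theorem linearComb_pi_gaussianReal {ι : Type*} [Fintype ι] (a : ι → ℝ) :
    ∃ v : NNReal, (Measure.pi fun _ : ι => gaussianReal 0 1).map (fun x => ∑ i, a i * x i) =
      gaussianReal 0 v := by
  have h : HasGaussianLaw (fun x : ι → ℝ => ∑ i, a i * x i)
      (Measure.pi fun _ : ι => gaussianReal 0 1) := by
    refine iIndepFun.hasGaussianLaw_fun_sum (X := fun i (x : ι → ℝ) => a i * x i) (fun i => ?_) ?_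
    · have h1 : HasGaussianLaw (fun x : ι → ℝ => x i)
          (Measure.pi fun _ : ι => gaussianReal 0 1) := by
        have h2 : (Measure.pi fun _ : ι => gaussianReal 0 1).map (fun x : ι → ℝ => x i) =
            gaussianReal 0 1 := (measurePreserving_eval (fun _ : ι => gaussianReal 0 1) i).map_eq
        refine ⟨?_⟩
        rw [h2]
        infer_instance
      exact h1.fun_smul (a i)
    · exact iIndepFun_pi (μ := fun _ => gaussianReal 0 1) (X := fun i (y : ℝ) => a i * y)
        (fun i => by fun_prop)
  have h0 : ∫ x : ι → ℝ, ∑ i, a i * x i ∂(Measure.pi fun _ : ι => gaussianReal 0 1) = 0 := by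
    rw [integral_finsetSum]
    · refine Finset.sum_eq_zero fun i _ => ?_
      rw [integral_const_mul, integral_eval, integral_id_gaussianReal, mul_zero]
    · exact fun i _ => (integrable_eval IsGaussian.integrable_id).const_mul _
  exact ⟨_, h0 ▸ h.map_eq_gaussianReal⟩

theorem integral_mul_pi_gaussianReal {ι : Type*} [Fintype ι] [DecidableEq ι] (i j : ι) :
    ∫ x : ι → ℝ, x i * x j ∂(Measure.pi fun _ : ι => gaussianReal 0 1) =
      if i = j then 1 else 0 := by
  split_ifs with h
  · subst h
    have := variance_fun_id_gaussianReal (μ := 0) (v := 1)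
    rw [variance_eq_integral (by fun_prop), integral_id_gaussianReal] at this
    rw [integral_comp_eval (μ := fun _ : ι => gaussianReal 0 1) (i := i)
      (f := fun y : ℝ => y * y) (by fun_prop)]
    simpa [sq] using this
  · have hI : iIndepFun (fun i (x : ι → ℝ) => x i) (Measure.pi fun _ : ι => gaussianReal 0 1) :=
      iIndepFun_pi (μ := fun _ => gaussianReal 0 1) (X := fun _ (y : ℝ) => y) (fun i => by fun_prop)
    rw [(hI.indepFun h).integral_fun_mul_eq_mul_integral
      (measurable_pi_apply i).aestronglyMeasurable (measurable_pi_apply j).aestronglyMeasurable,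
      integral_eval, integral_id_gaussianReal, zero_mul]

theorem integrable_mul_pi_gaussianReal {ι : Type*} [Fintype ι] (i j : ι) :
    Integrable (fun x : ι → ℝ => x i * x j) (Measure.pi fun _ : ι => gaussianReal 0 1) := by
  have h : ∀ i : ι, MemLp (fun x : ι → ℝ => x i) 2 (Measure.pi fun _ : ι => gaussianReal 0 1) :=
    fun i => IsGaussian.memLp_two_id.comp_measurePreserving
      (measurePreserving_eval (fun _ : ι => gaussianReal 0 1) i)
  exact (h i).integrable_mul (h j)

theorem integral_sub_zero_mul_pi_gaussianReal {n : ℕ} (i j : Fin (n + 1)) :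
    ∫ x : Fin (n + 1) → ℝ, ((x i - x 0) / √2) * ((x j - x 0) / √2)
      ∂(Measure.pi fun _ : Fin (n + 1) => gaussianReal 0 1) =
    ((if i = 0 then 0 else 1) + (if j = 0 then 0 else 1) - (if i = j then 0 else 1)) / 2 := by
  have e : ∀ x : Fin (n + 1) → ℝ, ((x i - x 0) / √2) * ((x j - x 0) / √2) =
      (x i * x j - x i * x 0 - x 0 * x j + x 0 * x 0) / 2 := by
    intro x
    rw [div_mul_div_comm, Real.mul_self_sqrt (by norm_num)]
    ring
  simp_rw [e]
  have I := integrable_mul_pi_gaussianReal (ι := Fin (n + 1))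
  rw [integral_div, integral_add (by exact ((I i j).sub (I i 0)).sub (I 0 j)) (I 0 0),
    integral_sub (by exact (I i j).sub (I i 0)) (I 0 j), integral_sub (I i j) (I i 0)]
  simp_rw [integral_mul_pi_gaussianReal, eq_comm (a := (0 : Fin (n + 1))) (b := j)]
  split_ifs <;> norm_num

theorem tendsto_abs_rpow_two_mul (s : ℝ) :
    Tendsto (fun H : ℝ => |s| ^ (2 * H)) (𝓝[>] 0) (𝓝 (if s = 0 then 0 else 1)) := by
  split_ifs with hs
  · refine tendsto_const_nhds.congr' ?_
    filter_upwards [self_mem_nhdsWithin] with H hH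
    rw [hs, abs_zero, Real.zero_rpow (by have : (0:ℝ) < H := hH; positivity)]
  · have : Continuous fun H : ℝ => |s| ^ (2 * H) :=
      Continuous.rpow continuous_const (by fun_prop) fun _ => Or.inl (abs_ne_zero.2 hs)
    simpa using (this.tendsto 0).mono_left nhdsWithin_le_nhds

theorem iSup_sub_zero_div_sqrt_two {n : ℕ} (hn : 1 ≤ n) (x : Fin (n + 1) → ℝ) :
    ⨆ i, (x i - x 0) / √2 = 1 / √2 * max 0 ((⨆ i : Fin n, x i.succ) - x 0) := by
  have : Nonempty (Fin n) := ⟨⟨0, hn⟩⟩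
  have h2 : (0 : ℝ) < √2 := by positivity
  have hb : BddAbove (range fun i : Fin n => x i.succ) := (finite_range _).bddAbove
  have hb' : BddAbove (range fun i => (x i - x 0) / √2) := (finite_range _).bddAbove
  rw [one_div, inv_mul_eq_div]
  apply le_antisymm
  · refine ciSup_le fun i => ?_
    gcongr
    refine Fin.cases ?_ (fun j => ?_) i
    · simp
    · exact le_max_of_le_right (by gcongr; exact le_ciSup hb j)
  · rw [div_le_iff₀ h2]
    refine max_le ?_ ?_
    · have := le_ciSup hb' 0
      simp only [sub_self, zero_div] at this
      positivity
    · rw [sub_le_iff_le_add]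
      refine ciSup_le fun j => ?_
      have := le_ciSup hb' j.succ
      rw [div_le_iff₀ h2] at this
      linarith

/-- for fixed `n ≥ 1`,
`lim_{H→0⁺} f(H,n) = (1/√2) E[(max_{1≤i≤n} ξ_i - ξ_0)⁺]` with i.i.d. standard normal
`ξ_0, …, ξ_n`. -/
theorem stmt8 {Ω : Type} [MeasurableSpace Ω] (μ : Measure Ω) [IsProbabilityMeasure μ]
    (B : ℝ → ℝ → Ω → ℝ) (hB : ∀ H ∈ Ioo (0:ℝ) 1, IsFBM μ H (B H))
    (n : ℕ) (hn : 1 ≤ n) :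
    Tendsto (fun H => expMaxGrid μ (B H) n) (𝓝[>] (0:ℝ))
      (𝓝 ((1 / Real.sqrt 2) *
        ∫ x : Fin (n + 1) → ℝ, max 0 ((⨆ i : Fin n, x i.succ) - x 0)
          ∂(Measure.pi fun _ : Fin (n + 1) => gaussianReal 0 1))) := by
  have hn0 : (n : ℝ) ≠ 0 := by positivity
  refine tendsto_of_seq_tendsto fun u hu => ?_
  have hu1 : ∀ᶠ k in atTop, u k ∈ Ioo (0 : ℝ) 1 :=
    hu.eventually (Ioo_mem_nhdsGT one_pos)
  obtain ⟨N, hN⟩ := eventually_atTop.1 hu1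
  refine (tendsto_add_atTop_iff_nat N).1 ?_
  have hfbm : ∀ k, IsFBM μ (u (k + N)) (B (u (k + N))) := fun k => hB _ (hN _ (by omega))
  have hu' : Tendsto (fun k => u (k + N)) atTop (𝓝[>] 0) := hu.comp (tendsto_add_atTop_nat N)
  have ht : ∀ i : Fin (n + 1), (0 : ℝ) ≤ ((i : ℕ) : ℝ) / (n : ℝ) := fun i => by positivity
  rw [← integral_const_mul]
  simp_rw [← iSup_sub_zero_div_sqrt_two hn]
  refine tendsto_integral_iSup_of_tendsto_cov
    (X := fun k i => B (u (k + N)) (((i : ℕ) : ℝ) / (n : ℝ)))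
    (Z := fun i (x : Fin (n + 1) → ℝ) => (x i - x 0) / √2)
    (fun k i => (hfbm k).1.1 _ (ht i)) (fun i => by fun_prop)
    (fun k c => (hfbm k).1.2 (n + 1) c _ ht) (fun c => ?_) fun i j => ?_
  · obtain ⟨v, hv⟩ := linearComb_pi_gaussianReal
      (fun i : Fin (n + 1) => c i / √2 - if i = 0 then ∑ j, c j / √2 else 0)
    refine ⟨v, hv ▸ congrArg (fun g => Measure.map g _) ?_⟩
    ext x
    simp_rw [sub_mul, Finset.sum_sub_distrib, ite_mul, zero_mul, Finset.sum_ite_eq', Finset.mem_univ,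
      if_true, Finset.sum_mul, ← Finset.sum_sub_distrib]
    exact Finset.sum_congr rfl fun i _ => by ring
  · rw [integral_sub_zero_mul_pi_gaussianReal]
    simp_rw [fun k => (hfbm k).2.2.2 _ _ (ht i) (ht j)]
    have l : ∀ s : ℝ, Tendsto (fun k => |s| ^ (2 * u (k + N))) atTop
      (𝓝 (if s = 0 then 0 else 1)) := fun s => (tendsto_abs_rpow_two_mul s).comp hu'
    have h := (((l (((i : ℕ) : ℝ) / n)).add (l (((j : ℕ) : ℝ) / n))).sub
      (l (((j : ℕ) : ℝ) / n - ((i : ℕ) : ℝ) / n))).div_const 2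
    have z : ∀ i : Fin (n + 1), (((i : ℕ) : ℝ) / n = 0) = (i = 0) := fun i => by
      rw [div_eq_zero_iff, or_iff_left hn0, Nat.cast_eq_zero, Fin.val_eq_zero_iff]
    have d : (((j : ℕ) : ℝ) / n - ((i : ℕ) : ℝ) / n = 0) = (i = j) := by
      rw [sub_eq_zero, div_left_inj' hn0, Nat.cast_inj, Fin.val_inj]
      exact propext eq_comm
    simpa only [abs_of_nonneg (ht i), abs_of_nonneg (ht j), z, d] using h
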